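/- arXiv:2105.07503 — 3 statements merged into one kernel-verified Lean document; each statement's English description precedes it below -/
import Mathlib

section
/- For any coefficients λ : Fin 4 → Fin 4 → ℂ and κ : Fin 4 → Fin 4 → Fin 4 → ℂ, let H = ∑_{μ ≠ ν} λ μ ν • (γ^μ * γ^ν) + ∑_{μ,ν,ρ pairwise distinct} κ μ ν ρ • (γ^μ * γ^ν * γ^ρ) (sums restricted to tuples of pairwise distinct indices). Then C * H = −Hᵀ * C. (Every Hamiltonian term of second or third degree in distinct gamma matrices, in particular every zero-mass Dirac Hamiltonian with a Yukawa pseudo-scalar coupling after removal of the term proportional to the identity, anti-intertwines with C.) -/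
noncomputable def γ0 : Matrix (Fin 4) (Fin 4) ℂ :=
  !![1, 0, 0, 0; 0, 1, 0, 0; 0, 0, -1, 0; 0, 0, 0, -1]

noncomputable def γ1 : Matrix (Fin 4) (Fin 4) ℂ :=
  !![0, 0, 0, 1; 0, 0, 1, 0; 0, -1, 0, 0; -1, 0, 0, 0]

noncomputable def γ2 : Matrix (Fin 4) (Fin 4) ℂ :=
  !![0, 0, 0, -Complex.I; 0, 0, Complex.I, 0; 0, Complex.I, 0, 0; -Complex.I, 0, 0, 0]

noncomputable def γ3 : Matrix (Fin 4) (Fin 4) ℂ :=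
  !![0, 0, 1, 0; 0, 0, 0, -1; -1, 0, 0, 0; 0, 1, 0, 0]

/-- The Dirac gamma matrices, indexed by `μ : Fin 4`. -/
noncomputable def γ : Fin 4 → Matrix (Fin 4) (Fin 4) ℂ := ![γ0, γ1, γ2, γ3]

/-- The matrix `C = i γ¹ γ³`. -/
noncomputable def Cmat : Matrix (Fin 4) (Fin 4) ℂ := Complex.I • (γ1 * γ3)

/-- The matrix `γ⁵ = i γ⁰ γ¹ γ² γ³`. -/
noncomputable def γ5 : Matrix (Fin 4) (Fin 4) ℂ := Complex.I • (γ0 * γ1 * γ2 * γ3)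

/-!
The matrix `C` commutes with the symmetric matrices `γ⁰`, `γ²` and anticommutes with the
antisymmetric ones `γ¹`, `γ³`, so each `γ μ` is self-adjoint for the bilinear form with matrix `C`,
and the adjoint of a product of gamma matrices is the product in reverse order. Reversing `k`
pairwise anticommuting factors costs one sign per pair of factors, `(-1) ^ (k.choose 2)` in total,
which is `-1` for `k = 2` and `k = 3`.
-/

open Matrix

/-- Two elements anticommute: the counterpart of `Commute` with a sign. It expresses the Clifford
relations between distinct gamma matrices. -/
def AntiCommute {M : Type*} [Mul M] [Neg M] (a b : M) : Prop :=
  a * b = -(b * a)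

namespace AntiCommute

theorem symm {M : Type*} [Mul M] [InvolutiveNeg M] {a b : M} (h : AntiCommute a b) :
    AntiCommute b a :=
  (neg_eq_iff_eq_neg.mpr h).symm

section Semigroup

variable {M : Type*} [Semigroup M] [HasDistribNeg M] {a b c : M}

theorem commute_mul_left (ha : AntiCommute a c) (hb : AntiCommute b c) : Commute (a * b) c :=
  calc a * b * c = -(a * c * b) := by rw [mul_assoc, hb, mul_neg, mul_assoc]
    _ = c * (a * b) := by rw [ha, neg_mul, neg_neg, mul_assoc]

theorem mul_left_of_commute_left (ha : Commute a c) (hb : AntiCommute b c) :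
    AntiCommute (a * b) c :=
  calc a * b * c = -(a * c * b) := by rw [mul_assoc, hb, mul_neg, mul_assoc]
    _ = -(c * (a * b)) := by rw [ha.eq, mul_assoc]

theorem mul_left_of_commute_right (ha : AntiCommute a c) (hb : Commute b c) :
    AntiCommute (a * b) c :=
  calc a * b * c = a * c * b := by rw [mul_assoc, hb.eq, mul_assoc]
    _ = -(c * (a * b)) := by rw [ha, neg_mul, mul_assoc]

end Semigroup

theorem smul_left {R M : Type*} [NonUnitalNonAssocRing M] [DistribSMul R M]
    [IsScalarTower R M M] [SMulCommClass R M M] {a b : M} (h : AntiCommute a b) (r : R) :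
    AntiCommute (r • a) b := by
  rw [AntiCommute, smul_mul_assoc, h, smul_neg, mul_smul_comm]

section Monoid

variable {M : Type*} [Monoid M] [HasDistribNeg M]

theorem list_prod_mul {a : M} {l : List M} (h : ∀ b ∈ l, AntiCommute b a) :
    l.prod * a = (-1) ^ l.length * (a * l.prod) := by
  induction l with
  | nil => simp
  | cons b l ih =>
    obtain ⟨hb, hl⟩ := List.forall_mem_cons.mp h
    calc (b :: l).prod * a = b * ((-1) ^ l.length * (a * l.prod)) := by
          rw [List.prod_cons, mul_assoc, ih hl]
      _ = (-1) ^ l.length * (b * a * l.prod) := by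
          rw [((Commute.neg_one_right b).pow_right _).left_comm, mul_assoc]
      _ = (-1) ^ (b :: l).length * (a * (b :: l).prod) := by
          rw [hb, List.length_cons, List.prod_cons, pow_succ]
          simp only [mul_assoc, neg_mul, mul_neg, one_mul]

theorem list_prod_reverse {l : List M} (h : l.Pairwise AntiCommute) :
    l.reverse.prod = (-1) ^ l.length.choose 2 * l.prod := by
  induction l with
  | nil => simp
  | cons a l ih =>
    obtain ⟨ha, hl⟩ := List.pairwise_cons.mp h
    calc (a :: l).reverse.prod = (-1) ^ l.length.choose 2 * (l.prod * a) := by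
          rw [List.reverse_cons, List.prod_append, List.prod_singleton, ih hl, mul_assoc]
      _ = (-1) ^ l.length.choose 2 * ((-1) ^ l.length * (a * l.prod)) := by
          rw [list_prod_mul fun b hb => (ha b hb).symm]
      _ = (-1) ^ (a :: l).length.choose 2 * (a :: l).prod := by
          rw [← mul_assoc, ← pow_add, List.length_cons, List.prod_cons, Nat.choose_succ_succ',
            Nat.choose_one_right, add_comm]

end Monoid

end AntiCommute

section Adjoint

variable {n R : Type*} [Fintype n] [CommRing R] {J A : Matrix n n R}

theorem isSelfAdjoint_of_isSymm_of_commute (hA : A.IsSymm) (h : Commute J A) :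
    J.IsSelfAdjoint A := by
  rw [Matrix.IsSelfAdjoint, Matrix.IsAdjointPair, hA.eq, h.eq]

theorem isSelfAdjoint_of_transpose_eq_neg_of_antiCommute (hA : Aᵀ = -A) (h : AntiCommute J A) :
    J.IsSelfAdjoint A := by
  rw [Matrix.IsSelfAdjoint, Matrix.IsAdjointPair, hA, h, neg_mul]

theorem isSkewAdjoint_iff_mul_eq_neg_transpose_mul :
    J.IsSkewAdjoint A ↔ J * A = -(Aᵀ * J) := by
  rw [Matrix.IsSkewAdjoint, Matrix.IsAdjointPair, mul_neg, eq_comm, neg_eq_iff_eq_neg]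

theorem isAdjointPair_list_prod_reverse_prod [DecidableEq n] {l : List (Matrix n n R)}
    (h : ∀ A ∈ l, J.IsSelfAdjoint A) : J.IsAdjointPair J l.prod l.reverse.prod := by
  induction l with
  | nil => simp [Matrix.IsAdjointPair]
  | cons A l ih =>
    obtain ⟨hA, hl⟩ := List.forall_mem_cons.mp h
    calc (A :: l).prodᵀ * J = l.prodᵀ * (Aᵀ * J) := by
          rw [List.prod_cons, transpose_mul, mul_assoc]
      _ = l.prodᵀ * J * A := by rw [hA, mul_assoc]
      _ = J * (l.reverse.prod * A) := by rw [ih hl, mul_assoc]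
      _ = J * (A :: l).reverse.prod := by
          rw [List.reverse_cons, List.prod_append, List.prod_singleton]

theorem isSkewAdjoint_list_prod [DecidableEq n] {l : List (Matrix n n R)}
    (hself : ∀ A ∈ l, J.IsSelfAdjoint A) (hanti : l.Pairwise AntiCommute)
    (hodd : Odd (l.length.choose 2)) :
    J.IsSkewAdjoint l.prod := by
  have hreverse : l.reverse.prod = -l.prod := by
    rw [AntiCommute.list_prod_reverse hanti, hodd.neg_one_pow, neg_one_mul]
  rw [Matrix.IsSkewAdjoint, ← hreverse]
  exact isAdjointPair_list_prod_reverse_prod hself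

variable {ι : Type*} {Γ : ι → Matrix n n R}

theorem isSkewAdjoint_mul (hself : ∀ i, J.IsSelfAdjoint (Γ i))
    (hanti : Pairwise fun i j => AntiCommute (Γ i) (Γ j)) {i j : ι} (hij : i ≠ j) :
    J.IsSkewAdjoint (Γ i * Γ j) := by
  classical
  simpa using isSkewAdjoint_list_prod (l := [Γ i, Γ j]) (by simp [hself])
    (by simp [hanti hij]) ⟨0, rfl⟩

theorem isSkewAdjoint_mul_mul (hself : ∀ i, J.IsSelfAdjoint (Γ i))
    (hanti : Pairwise fun i j => AntiCommute (Γ i) (Γ j)) {i j k : ι}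
    (hij : i ≠ j) (hik : i ≠ k) (hjk : j ≠ k) : J.IsSkewAdjoint (Γ i * Γ j * Γ k) := by
  classical
  simpa [mul_assoc] using isSkewAdjoint_list_prod (l := [Γ i, Γ j, Γ k]) (by simp [hself])
    (by simp [hanti hij, hanti hik, hanti hjk]) ⟨1, rfl⟩

theorem second_third_degree_anti_intertwines_C_general [Fintype ι] [DecidableEq ι]
    (hself : ∀ i, J.IsSelfAdjoint (Γ i)) (hanti : Pairwise fun i j => AntiCommute (Γ i) (Γ j))
    (lam : ι → ι → R) (κ : ι → ι → ι → R) :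
    J * ((∑ i, ∑ j, if i ≠ j then lam i j • (Γ i * Γ j) else 0) +
        ∑ i, ∑ j, ∑ k, if i ≠ j ∧ i ≠ k ∧ j ≠ k then κ i j k • (Γ i * Γ j * Γ k) else 0) =
      -(((∑ i, ∑ j, if i ≠ j then lam i j • (Γ i * Γ j) else 0) +
        ∑ i, ∑ j, ∑ k, if i ≠ j ∧ i ≠ k ∧ j ≠ k then κ i j k • (Γ i * Γ j * Γ k) else 0)ᵀ *
        J) := by
  classical
  rw [← isSkewAdjoint_iff_mul_eq_neg_transpose_mul, ← mem_skewAdjointMatricesSubmodule]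
  refine add_mem (sum_mem fun i _ => sum_mem fun j _ => ?_)
    (sum_mem fun i _ => sum_mem fun j _ => sum_mem fun k _ => ?_)
  · split_ifs with hij
    · exact Submodule.smul_mem _ _
        ((mem_skewAdjointMatricesSubmodule _ _).mpr (isSkewAdjoint_mul hself hanti hij))
    · exact zero_mem _
  · split_ifs with hijk
    · obtain ⟨hij, hik, hjk⟩ := hijk
      exact Submodule.smul_mem _ _ ((mem_skewAdjointMatricesSubmodule _ _).mpr
        (isSkewAdjoint_mul_mul hself hanti hij hik hjk))
    · exact zero_mem _

end Adjoint

theorem pairwise_antiCommute_γ : Pairwise fun μ ν => AntiCommute (γ μ) (γ ν) := by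
  have h01 : AntiCommute γ0 γ1 := by simp [AntiCommute, γ0, γ1]
  have h02 : AntiCommute γ0 γ2 := by simp [AntiCommute, γ0, γ2]
  have h03 : AntiCommute γ0 γ3 := by simp [AntiCommute, γ0, γ3]
  have h12 : AntiCommute γ1 γ2 := by simp [AntiCommute, γ1, γ2]
  have h13 : AntiCommute γ1 γ3 := by simp [AntiCommute, γ1, γ3]
  have h23 : AntiCommute γ2 γ3 := by simp [AntiCommute, γ2, γ3]
  intro μ ν hμν
  fin_cases μ <;> fin_cases ν
  all_goals first
    | exact absurd rfl hμν
    | assumption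
    | exact AntiCommute.symm (by assumption)

theorem isSymm_γ0 : γ0.IsSymm := by
  ext i j; fin_cases i <;> fin_cases j <;> rfl

theorem isSymm_γ2 : γ2.IsSymm := by
  ext i j; fin_cases i <;> fin_cases j <;> rfl

theorem transpose_γ1 : γ1ᵀ = -γ1 := by
  ext i j; fin_cases i <;> fin_cases j <;> simp [γ1]

theorem transpose_γ3 : γ3ᵀ = -γ3 := by
  ext i j; fin_cases i <;> fin_cases j <;> simp [γ3]

theorem isSelfAdjoint_Cmat_γ (μ : Fin 4) : Cmat.IsSelfAdjoint (γ μ) := by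
  have anti (μ ν : Fin 4) (h : μ ≠ ν := by decide) : AntiCommute (γ μ) (γ ν) :=
    pairwise_antiCommute_γ h
  have commute_γ0 : Commute Cmat γ0 :=
    ((anti 1 0).commute_mul_left (anti 3 0)).smul_left _
  have commute_γ2 : Commute Cmat γ2 :=
    ((anti 1 2).commute_mul_left (anti 3 2)).smul_left _
  have antiCommute_γ1 : AntiCommute Cmat γ1 :=
    (AntiCommute.mul_left_of_commute_left (.refl γ1) (anti 3 1)).smul_left _
  have antiCommute_γ3 : AntiCommute Cmat γ3 :=
    ((anti 1 3).mul_left_of_commute_right (.refl γ3)).smul_left _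
  match μ with
  | 0 => exact isSelfAdjoint_of_isSymm_of_commute isSymm_γ0 commute_γ0
  | 1 => exact isSelfAdjoint_of_transpose_eq_neg_of_antiCommute transpose_γ1 antiCommute_γ1
  | 2 => exact isSelfAdjoint_of_isSymm_of_commute isSymm_γ2 commute_γ2
  | 3 => exact isSelfAdjoint_of_transpose_eq_neg_of_antiCommute transpose_γ3 antiCommute_γ3

/-- Every Hamiltonian term of second or third degree in distinct gamma matrices
anti-intertwines with `C`: `C H = −Hᵀ C`. -/
theorem second_third_degree_anti_intertwines_C
    (lam : Fin 4 → Fin 4 → ℂ) (κ : Fin 4 → Fin 4 → Fin 4 → ℂ) :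
    Cmat *
        ((∑ μ : Fin 4, ∑ ν : Fin 4, if μ ≠ ν then lam μ ν • (γ μ * γ ν) else 0) +
          ∑ μ : Fin 4, ∑ ν : Fin 4, ∑ ρ : Fin 4,
            if μ ≠ ν ∧ μ ≠ ρ ∧ ν ≠ ρ then κ μ ν ρ • (γ μ * γ ν * γ ρ) else 0) =
      -(((∑ μ : Fin 4, ∑ ν : Fin 4, if μ ≠ ν then lam μ ν • (γ μ * γ ν) else 0) +
          ∑ μ : Fin 4, ∑ ν : Fin 4, ∑ ρ : Fin 4,
            if μ ≠ ν ∧ μ ≠ ρ ∧ ν ≠ ρ then κ μ ν ρ • (γ μ * γ ν * γ ρ) else 0).transpose *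
        Cmat) :=
  second_third_degree_anti_intertwines_C_general isSelfAdjoint_Cmat_γ pairwise_antiCommute_γ lam κ
end

section
/- Let A₁, B₁, C₁, A₂, B₂, C₂ be 4×4 complex matrices with A₁ᵀ = −A₁, let a : Fin 4 → ℂ and b : Fin 4 → Fin 4 → ℂ, and define the product-state tensor Ψ j k l = a j * b k l. Then the degree-4 tensor sandwich contraction ∑_{i,j,k,l,m,n,p,q,r,s,t,u : Fin 4} A₁ i j * B₁ m k * C₁ n l * Ψ j k l * Ψ q m n * A₂ q r * B₂ p s * C₂ u t * Ψ r s t * Ψ i p u equals 0. (The degree-4 invariants of type I_a for three spinors vanish identically on states where the first spinor is in a product with the other two, due to the antisymmetry of the matrix sandwiched between the first-spinor indices.) -/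
/-!
On a product state `a ⊗ b` the type-`I_a` contraction splits into four scalar factors, one of which
is `aᵀ A₁ a`: both indices of `A₁` are contracted with the first spinor, and these are two copies of
the same vector. An antisymmetric matrix has a vanishing quadratic form as soon as `2` is not a zero
divisor.
-/

section

open Matrix
open scoped Kronecker nonZeroDivisors

variable {ι κ μ R : Type*} [Fintype ι] [Fintype κ] [Fintype μ]

theorem dotProduct_mulVec_eq_sum_sum [NonUnitalSemiring R] (v : ι → R) (A : Matrix ι κ R)
    (w : κ → R) : v ⬝ᵥ A *ᵥ w = ∑ i, ∑ j, v i * A i j * w j := by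
  simp only [dotProduct, mulVec, Finset.mul_sum, mul_assoc]

theorem dotProduct_mulVec_self_eq_zero_of_transpose_eq_neg [CommRing R] (h2 : (2 : R) ∈ R⁰)
    {A : Matrix ι ι R} (hA : Aᵀ = -A) (v : ι → R) : v ⬝ᵥ A *ᵥ v = 0 := by
  have eq_neg_self : v ⬝ᵥ A *ᵥ v = -(v ⬝ᵥ A *ᵥ v) := calc
    v ⬝ᵥ A *ᵥ v = v ⬝ᵥ Aᵀ *ᵥ v := by rw [mulVec_transpose, dotProduct_mulVec, dotProduct_comm]
    _ = -(v ⬝ᵥ A *ᵥ v) := by rw [hA, neg_mulVec, dotProduct_neg]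
  rw [← mul_left_mem_nonZeroDivisors_eq_zero_iff h2, two_mul]
  exact eq_neg_iff_add_eq_zero.mp eq_neg_self

section CommSemiring

variable [CommSemiring R]

/-- The quadratic form `bᵀ (B ⊗ C) b` on two-spinor tensors `b`, which are regarded as vectors
indexed by pairs. It collects the part of a contraction that involves the last two spinors. -/
def pairForm (B : Matrix κ κ R) (C : Matrix μ μ R) (b : κ → μ → R) : R :=
  b.uncurry ⬝ᵥ (B ⊗ₖ C) *ᵥ b.uncurry

-- This summation order and the next are those of `k l m n` and `p s t u` in `contractionIa`.
theorem pairForm_eq_sum_col_col_row_row (B : Matrix κ κ R) (C : Matrix μ μ R) (b : κ → μ → R) :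
    pairForm B C b = ∑ k, ∑ l, ∑ m, ∑ n, b m n * (B m k * C n l) * b k l := by
  rw [pairForm, dotProduct_mulVec_eq_sum_sum, Finset.sum_comm]
  simp only [Fintype.sum_prod_type, kroneckerMap_apply, Function.uncurry_apply_pair]

theorem pairForm_eq_sum_row_col_col_row (B : Matrix κ κ R) (C : Matrix μ μ R) (b : κ → μ → R) :
    pairForm B C b = ∑ m, ∑ k, ∑ l, ∑ n, b m n * (B m k * C n l) * b k l := by
  rw [pairForm, dotProduct_mulVec_eq_sum_sum, Fintype.sum_prod_type]
  refine Finset.sum_congr rfl fun m _ => ?_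
  rw [Finset.sum_comm]
  simp only [Fintype.sum_prod_type, kroneckerMap_apply, Function.uncurry_apply_pair]

/-- The degree-4 sandwich contraction of type `I_a` of a three-spinor tensor `Ψ`. The three spinors
may have different index types. -/
def contractionIa (A₁ : Matrix ι ι R) (B₁ : Matrix κ κ R) (C₁ : Matrix μ μ R)
    (A₂ : Matrix ι ι R) (B₂ : Matrix κ κ R) (C₂ : Matrix μ μ R) (Ψ : ι → κ → μ → R) : R :=
  ∑ i, ∑ j, ∑ k, ∑ l, ∑ m, ∑ n, ∑ p, ∑ q, ∑ r, ∑ s, ∑ t, ∑ u,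
    A₁ i j * B₁ m k * C₁ n l * Ψ j k l * Ψ q m n *
      A₂ q r * B₂ p s * C₂ u t * Ψ r s t * Ψ i p u

theorem contractionIa_product (A₁ : Matrix ι ι R) (B₁ : Matrix κ κ R) (C₁ : Matrix μ μ R)
    (A₂ : Matrix ι ι R) (B₂ : Matrix κ κ R) (C₂ : Matrix μ μ R) (a : ι → R) (b : κ → μ → R) :
    contractionIa A₁ B₁ C₁ A₂ B₂ C₂ (fun j k l => a j * b k l) =
      (a ⬝ᵥ A₁ *ᵥ a) * pairForm B₁ C₁ b * (a ⬝ᵥ A₂ *ᵥ a) * pairForm B₂ C₂ b := calc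
  _ = ∑ i, ∑ j, ∑ k, ∑ l, ∑ m, ∑ n, ∑ p, ∑ q, ∑ r, ∑ s, ∑ t, ∑ u,
      (a i * A₁ i j * a j) * (b m n * (B₁ m k * C₁ n l) * b k l) *
        (a q * A₂ q r * a r) * (b p u * (B₂ p s * C₂ u t) * b s t) := by
    unfold contractionIa
    iterate 12 refine Finset.sum_congr rfl fun _ _ => ?_
    ring
  _ = _ := by
    simp only [← Finset.mul_sum, ← Finset.sum_mul, dotProduct_mulVec_eq_sum_sum,
      pairForm_eq_sum_col_col_row_row B₁, pairForm_eq_sum_row_col_col_row B₂]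

end CommSemiring

theorem degree_four_Ia_contraction_vanishes_on_product_states_general [CommRing R]
    (h2 : (2 : R) ∈ R⁰) (A₁ : Matrix ι ι R) (B₁ : Matrix κ κ R) (C₁ : Matrix μ μ R)
    (A₂ : Matrix ι ι R) (B₂ : Matrix κ κ R) (C₂ : Matrix μ μ R) (hA₁ : A₁ᵀ = -A₁)
    (a : ι → R) (b : κ → μ → R) :
    contractionIa A₁ B₁ C₁ A₂ B₂ C₂ (fun j k l => a j * b k l) = 0 := by
  rw [contractionIa_product, dotProduct_mulVec_self_eq_zero_of_transpose_eq_neg h2 hA₁]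
  simp only [zero_mul]

end

/-- The degree-4 tensor sandwich contraction of type `I_a` for three spinors vanishes
identically on states where the first spinor is in a product with the other two, due to
the antisymmetry of the matrix sandwiched between the first-spinor indices. -/
theorem degree_four_Ia_contraction_vanishes_on_product_states
    (A₁ B₁ C₁ A₂ B₂ C₂ : Matrix (Fin 4) (Fin 4) ℂ)
    (hA₁ : A₁.transpose = -A₁)
    (a : Fin 4 → ℂ) (b : Fin 4 → Fin 4 → ℂ) :
    ∑ i : Fin 4, ∑ j : Fin 4, ∑ k : Fin 4, ∑ l : Fin 4, ∑ m : Fin 4, ∑ n : Fin 4,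
      ∑ p : Fin 4, ∑ q : Fin 4, ∑ r : Fin 4, ∑ s : Fin 4, ∑ t : Fin 4, ∑ u : Fin 4,
        A₁ i j * B₁ m k * C₁ n l * (a j * b k l) * (a q * b m n) *
          A₂ q r * B₂ p s * C₂ u t * (a r * b s t) * (a i * b p u) = 0 :=
  degree_four_Ia_contraction_vanishes_on_product_states_general
    (mem_nonZeroDivisors_of_ne_zero two_ne_zero) A₁ B₁ C₁ A₂ B₂ C₂ hA₁ a b
end

section
/- For every family of real coefficients ω : Fin 4 → Fin 4 → ℝ, let S = Matrix.exp ℂ ((1/2) • ∑_{ρ,σ} (ω ρ σ : ℂ) • S^{ρσ}). Then for each μ ∈ {0,1,2,3} there exist real coefficients Λ : Fin 4 → ℝ such that S⁻¹ * γ^μ * S = ∑_{ν} (Λ ν : ℂ) • γ^ν. (Conjugation by the spinor representation of a proper orthochronous Lorentz transformation carries each gamma matrix into a real linear combination of the gamma matrices, S(Λ)⁻¹ γ^μ S(Λ) = ∑_ν Λ^μ_ν γ^ν, which expresses the Lorentz covariance of the Dirac equation.) -/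
/-- The Lorentz generators `S^{ρσ} = (1/4)(γ^ρ γ^σ − γ^σ γ^ρ)`. -/
noncomputable def Sgen (ρ σ : Fin 4) : Matrix (Fin 4) (Fin 4) ℂ :=
  (1 / 4 : ℂ) • (γ ρ * γ σ - γ σ * γ ρ)

/-!
The commutator of a gamma matrix with a generator `[γ^ρ, γ^σ]` is, by the Clifford relations, a real
combination of gamma matrices. So the real span `V` of the gamma matrices is stable under the inner
derivation `D : x ↦ [x, X]`, where `X` is the exponent of `S`. Left and right multiplication by `X`
commute, hence `exp(-X) x exp(X) = exp(D) x`, and `exp(D)` preserves the closed subspace `V`.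
-/

open NormedSpace MulOpposite

section ExpOperator

variable {𝕂 R E : Type*} [RCLike 𝕂] [NormedAddCommGroup E] [NormedSpace 𝕂 E]

theorem exp_lsmul [NormedRing R] [NormedAlgebra 𝕂 R] [CompleteSpace R] [Module R E]
    [IsBoundedSMul R E] [IsScalarTower 𝕂 R E] (a : R) :
    exp (ContinuousLinearMap.lsmul 𝕂 R a : E →L[𝕂] E) =
      ContinuousLinearMap.lsmul 𝕂 R (exp a) := by
  let lsmulHom : R →+* (E →L[𝕂] E) :=
    { (ContinuousLinearMap.lsmul 𝕂 R : R →L[𝕂] E →L[𝕂] E).toAddMonoidHom with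
      map_one' := by ext; simp
      map_mul' := fun a b ↦ by ext; simp [mul_smul] }
  let : NormedAlgebra ℚ R := .restrictScalars ℚ 𝕂 R
  let : Algebra ℚ (E →L[𝕂] E) := .compHom _ (algebraMap ℚ 𝕂)
  exact (map_exp lsmulHom (ContinuousLinearMap.lsmul 𝕂 R).continuous a).symm

theorem exp_apply_mem_of_mapsTo [CompleteSpace E] {V : Submodule 𝕂 E}
    (hV : IsClosed (V : Set E)) {T : E →L[𝕂] E} (hT : Set.MapsTo T V V) {x : E} (hx : x ∈ V) :
    exp T x ∈ V := by
  have hasSum_exp : HasSum (fun n : ℕ ↦ (n.factorial : 𝕂)⁻¹ • (T ^ n) x) (exp T x) := by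
    simpa using (exp_series_hasSum_exp' (𝕂 := 𝕂) T).mapL (ContinuousLinearMap.apply 𝕂 E x)
  have pow_apply_mem (n : ℕ) : (T ^ n) x ∈ V := by
    rw [FunLike.coe_pow_eq_iterate]
    exact hT.iterate n hx
  exact hV.mem_of_tendsto hasSum_exp
    (.of_forall fun _ ↦ V.sum_mem fun n _ ↦ V.smul_mem _ (pow_apply_mem n))

end ExpOperator

section Conjugation

variable (𝕂 : Type*) {A : Type*} [RCLike 𝕂] [NormedRing A] [NormedAlgebra 𝕂 A]

/-- The inner derivation `x ↦ ⁅x, a⁆` of a normed algebra as a continuous operator, written as right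
multiplication by `a` minus left multiplication by `a`. It is the generator of the conjugations
`x ↦ exp (-ta) * x * exp (ta)`, so its sign is opposite to that of `LieAlgebra.ad`. -/
noncomputable def innerDerivation (a : A) : A →L[𝕂] A :=
  ContinuousLinearMap.lsmul 𝕂 Aᵐᵒᵖ (op a) + ContinuousLinearMap.lsmul 𝕂 A (-a)

theorem innerDerivation_apply (a x : A) : innerDerivation 𝕂 a x = ⁅x, a⁆ := by
  simp [innerDerivation, Ring.lie_def, sub_eq_add_neg]

theorem exp_innerDerivation_apply [CompleteSpace A] (a x : A) :
    exp (innerDerivation 𝕂 a) x = exp (-a) * x * exp a := by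
  let : NormedAlgebra ℚ (A →L[𝕂] A) := .restrictScalars ℚ 𝕂 _
  have commute_right_left : Commute (ContinuousLinearMap.lsmul 𝕂 Aᵐᵒᵖ (op a) : A →L[𝕂] A)
      (ContinuousLinearMap.lsmul 𝕂 A (-a)) := by
    ext y
    simp [mul_assoc]
  rw [innerDerivation, exp_add_of_commute commute_right_left, exp_lsmul, exp_lsmul, exp_op]
  simp

variable {𝕂}

theorem exp_neg_mul_mul_exp_mem [CompleteSpace A] {V : Submodule 𝕂 A}
    (hV : IsClosed (V : Set A)) {a : A} (ha : ∀ x ∈ V, ⁅x, a⁆ ∈ V) {x : A} (hx : x ∈ V) :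
    exp (-a) * x * exp a ∈ V := by
  rw [← exp_innerDerivation_apply 𝕂]
  refine exp_apply_mem_of_mapsTo hV (fun y hy ↦ ?_) hx
  rw [innerDerivation_apply]
  exact ha y hy

end Conjugation

section Clifford

theorem lie_lie_eq_anticommutators {A : Type*} [Ring A] (x y z : A) :
    ⁅x, ⁅y, z⁆⁆ = (x * y + y * x) * z + z * (x * y + y * x) -
      ((x * z + z * x) * y + y * (x * z + z * x)) := by
  simp only [Ring.lie_def]
  noncomm_ring

variable {R A ι : Type*} [CommRing R] [Ring A] [Algebra R A]

/-- The Clifford relations `{g i, g j} = 2 η i j` for a family `g` in an `R`-algebra. -/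
def SatisfiesClifford (η : Matrix ι ι R) (g : ι → A) : Prop :=
  ∀ i j, g i * g j + g j * g i = algebraMap R A (2 * η i j)

variable (R) in
/-- The span of the commutators of a family `g`. If `g` satisfies the Clifford relations, this is
the image of the Lie algebra of the spin group. -/
def commutatorSpan (g : ι → A) : Submodule R A :=
  Submodule.span R (Set.range fun p : ι × ι ↦ ⁅g p.1, g p.2⁆)

theorem lie_mem_commutatorSpan (g : ι → A) (i j : ι) : ⁅g i, g j⁆ ∈ commutatorSpan R g :=
  Submodule.subset_span ⟨(i, j), rfl⟩

variable {η : Matrix ι ι R} {g : ι → A}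

theorem SatisfiesClifford.lie_lie (hg : SatisfiesClifford η g) (i j k : ι) :
    ⁅g i, ⁅g j, g k⁆⁆ = (4 * η i j) • g k - (4 * η i k) • g j := by
  rw [lie_lie_eq_anticommutators, hg i j, hg i k]
  simp only [← Algebra.commutes (2 * η _ _), ← Algebra.smul_def, ← add_smul]
  ring_nf

theorem SatisfiesClifford.lie_mem_span (hg : SatisfiesClifford η g) {x X : A}
    (hx : x ∈ Submodule.span R (Set.range g)) (hX : X ∈ commutatorSpan R g) :
    ⁅x, X⁆ ∈ Submodule.span R (Set.range g) := by
  refine LinearMap.BilinMap.apply_apply_mem_of_mem_span _ _ _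
    (LinearMap.mul R A - (LinearMap.mul R A).flip) ?_ x X hx hX
  rintro _ ⟨i, rfl⟩ _ ⟨⟨j, k⟩, rfl⟩
  have mem_span (l : ι) : g l ∈ Submodule.span R (Set.range g) := Submodule.subset_span ⟨l, rfl⟩
  have lie_lie_mem : ⁅g i, ⁅g j, g k⁆⁆ ∈ Submodule.span R (Set.range g) := by
    rw [hg.lie_lie]
    exact sub_mem (Submodule.smul_mem _ _ (mem_span k)) (Submodule.smul_mem _ _ (mem_span j))
  exact lie_lie_mem

end Clifford

theorem gamma_conjugation_by_spinor_rep_general {𝕂 A ι : Type*} [RCLike 𝕂] [NormedRing A]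
    [NormedAlgebra 𝕂 A] [CompleteSpace A] [Fintype ι] {η : Matrix ι ι 𝕂} {g : ι → A}
    (hg : SatisfiesClifford η g) {X : A} (hX : X ∈ commutatorSpan 𝕂 g) (μ : ι) :
    ∃ Λ : ι → 𝕂, exp (-X) * g μ * exp X = ∑ ν, Λ ν • g ν := by
  have : FiniteDimensional 𝕂 (Submodule.span 𝕂 (Set.range g)) :=
    .span_of_finite 𝕂 (Set.finite_range g)
  have conj_mem : exp (-X) * g μ * exp X ∈ Submodule.span 𝕂 (Set.range g) :=
    exp_neg_mul_mul_exp_mem (Submodule.closed_of_finiteDimensional _)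
      (fun _ hx ↦ hg.lie_mem_span hx hX) (Submodule.subset_span ⟨μ, rfl⟩)
  obtain ⟨Λ, hΛ⟩ := (Submodule.mem_span_range_iff_exists_fun 𝕂).1 conj_mem
  exact ⟨Λ, hΛ.symm⟩

/-- The Minkowski metric with the signature `(+, -, -, -)` of the gamma matrices. -/
def minkowskiMetric : Matrix (Fin 4) (Fin 4) ℝ := Matrix.diagonal ![1, -1, -1, -1]

theorem satisfiesClifford_γ : SatisfiesClifford minkowskiMetric γ := by
  intro μ ν
  fin_cases μ <;> fin_cases ν <;>
    simp [γ, γ0, γ1, γ2, γ3, minkowskiMetric, ← Matrix.ext_iff, Fin.forall_fin_succ,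
      Matrix.algebraMap_matrix_apply] <;>
    norm_num

theorem Sgen_mem_commutatorSpan (ρ σ : Fin 4) : Sgen ρ σ ∈ commutatorSpan ℝ γ := by
  have Sgen_eq : Sgen ρ σ = (1 / 4 : ℝ) • ⁅γ ρ, γ σ⁆ := by
    rw [Sgen, Ring.lie_def, ← Complex.coe_smul]
    norm_num
  rw [Sgen_eq]
  exact Submodule.smul_mem _ _ (lie_mem_commutatorSpan γ ρ σ)

theorem half_sum_smul_Sgen_mem_commutatorSpan (ω : Fin 4 → Fin 4 → ℝ) :
    (1 / 2 : ℂ) • ∑ ρ, ∑ σ, (ω ρ σ : ℂ) • Sgen ρ σ ∈ commutatorSpan ℝ γ := by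
  have half_eq : (1 / 2 : ℂ) = ((1 / 2 : ℝ) : ℂ) := by norm_num
  simp only [half_eq, Complex.coe_smul]
  exact Submodule.smul_mem _ _ (Submodule.sum_mem _ fun ρ _ ↦ Submodule.sum_mem _ fun σ _ ↦
    Submodule.smul_mem _ _ (Sgen_mem_commutatorSpan ρ σ))

/-- Conjugation by the spinor representation `S = exp((1/2) ∑ ω_{ρσ} S^{ρσ})` of a proper
orthochronous Lorentz transformation carries each gamma matrix into a real linear
combination of the gamma matrices: `S⁻¹ γ^μ S = ∑_ν Λ^μ_ν γ^ν`. -/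
theorem gamma_conjugation_by_spinor_rep (ω : Fin 4 → Fin 4 → ℝ) (μ : Fin 4) :
    ∃ Λ : Fin 4 → ℝ,
      (NormedSpace.exp
          ((1 / 2 : ℂ) • ∑ ρ : Fin 4, ∑ σ : Fin 4, (ω ρ σ : ℂ) • Sgen ρ σ))⁻¹ *
          γ μ *
          NormedSpace.exp
            ((1 / 2 : ℂ) • ∑ ρ : Fin 4, ∑ σ : Fin 4, (ω ρ σ : ℂ) • Sgen ρ σ) =
        ∑ ν : Fin 4, ((Λ ν : ℂ)) • γ ν := by
  obtain ⟨Λ, hΛ⟩ := open scoped Matrix.Norms.Operator in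
    gamma_conjugation_by_spinor_rep_general satisfiesClifford_γ
      (half_sum_smul_Sgen_mem_commutatorSpan ω) μ
  rw [← Matrix.exp_neg]
  exact ⟨Λ, hΛ⟩
end
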